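/- Let 0 < q ≤ p < 2. There exists a constant A(p,q) > 0, depending only on p and q, such that for every Banach space X and every injective map τ : D → D, the vector-valued rearrangement operators satisfy ‖T_{τ,q} ⊗ Id_X‖_q^{q/(2−q)} ≤ A(p,q) · ‖T_{τ,p} ⊗ Id_X‖_p^{p/(2−p)} (inequality in [0,∞]). -/

import Mathlib

open MeasureTheory Set
open scoped ENNReal NNReal Classical

noncomputable section

/-- A dyadic subinterval of `[0,1)`: the half-open interval
`[k/2^n, (k+1)/2^n)` with `k < 2^n`. -/
structure DyadicI where
  n : ℕ
  k : ℕ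
  hk : k < 2 ^ n

instance : Nonempty DyadicI := ⟨⟨0, 0, by norm_num⟩⟩

namespace DyadicI

/-- The length `|I| = 2^{-n}` of a dyadic interval. -/
def len (I : DyadicI) : ℝ := (2 : ℝ) ^ (-(I.n : ℤ))

/-- The left endpoint `k 2^{-n}` of a dyadic interval. -/
def lep (I : DyadicI) : ℝ := (I.k : ℝ) * I.len

/-- The underlying point set `[k/2^n, (k+1)/2^n)` of a dyadic interval. -/
def toSet (I : DyadicI) : Set ℝ := Set.Ico I.lep (I.lep + I.len)

/-- The `L^∞`-normalized Haar function `h_I`: `1` on the left half of `I`,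
`-1` on the right half of `I`, `0` off `I`. -/
def haar (I : DyadicI) (t : ℝ) : ℝ :=
  if t ∈ Set.Ico I.lep (I.lep + I.len / 2) then 1
  else if t ∈ Set.Ico (I.lep + I.len / 2) (I.lep + I.len) then -1
  else 0

end DyadicI

open DyadicI

section Defs

variable {X : Type*} [NormedAddCommGroup X] [NormedSpace ℝ X]

/-- The square function `𝕊(f)` of the `X`-valued Haar expansion `f = ∑_{I ∈ s} x_I h_I`:
`𝕊(f)(t) = (E_ε ‖∑_I ε_I x_I h_I(t)‖²)^{1/2}`, the average being taken over all
choices of signs `ε_I ∈ {±1}`, `I ∈ s`. -/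
def sqFn (s : Finset DyadicI) (x : DyadicI → X) (t : ℝ) : ℝ :=
  Real.sqrt ((∑ ε : {I // I ∈ s} → Bool,
    ‖∑ I ∈ s.attach, ((if ε I then (1 : ℝ) else -1) * haar I.1 t) • x I.1‖ ^ 2) /
      2 ^ s.card)

/-- The `H^p_X` (quasi-)norm of `f = ∑_{I ∈ s} x_I h_I`:
`‖f‖ = (∫₀¹ 𝕊(f)(t)^p dt)^{1/p}`. -/
def HpNormV (p : ℝ) (s : Finset DyadicI) (x : DyadicI → X) : ℝ :=
  (∫ t in Set.Icc (0 : ℝ) 1, sqFn s x t ^ p) ^ (1 / p)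

/-- The coefficients of `(T_{τ,p} ⊗ Id_X)(f)` for `f = ∑_{I ∈ s} x_I h_I`, namely
`(T_{τ,p} ⊗ Id_X)(f) = ∑_{I ∈ s} (|I|/|τ(I)|)^{1/p} x_I h_{τ(I)}`, as a family of
coefficients indexed by the Haar support `τ(s)`. -/
def rearrCoef (τ : DyadicI → DyadicI) (p : ℝ) (s : Finset DyadicI) (x : DyadicI → X) :
    DyadicI → X :=
  fun J => ∑ I ∈ s, if τ I = J then ((len I / len (τ I)) ^ (1 / p)) • x I else 0

/-- The scalar dyadic square function `S(f) = (∑_I a_I² 1_I)^{1/2}`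
of `f = ∑_{I ∈ s} a_I h_I`. -/
def sqFnS (s : Finset DyadicI) (a : DyadicI → ℝ) (t : ℝ) : ℝ :=
  Real.sqrt (∑ I ∈ s, a I ^ 2 * Set.indicator (toSet I) (fun _ => (1 : ℝ)) t)

/-- The scalar dyadic `H^p` (quasi-)norm `‖f‖_{H^p} = ‖S(f)‖_{L^p[0,1]}`. -/
def HpNormS (p : ℝ) (s : Finset DyadicI) (a : DyadicI → ℝ) : ℝ :=
  (∫ t in Set.Icc (0 : ℝ) 1, sqFnS s a t ^ p) ^ (1 / p)

/-- The coefficients of the scalar rearrangement operator `T_{τ,p}` applied to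
`f = ∑_{I ∈ s} a_I h_I`; `T_{τ,p}` is determined by
`T_{τ,p}(h_I/|I|^{1/p}) = h_{τ(I)}/|τ(I)|^{1/p}`. -/
def rearrCoefS (τ : DyadicI → DyadicI) (p : ℝ) (s : Finset DyadicI) (a : DyadicI → ℝ) :
    DyadicI → ℝ :=
  fun J => ∑ I ∈ s, if τ I = J then ((len I / len (τ I)) ^ (1 / p)) * a I else 0

/-- The operator norm `‖T_{τ,p} ⊗ Id_X : H^p_X → H^p_X‖ ∈ [0,∞]`, computed as the
supremum over finitely supported `f` in the unit ball of `H^p_X`. -/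
def hpOpNorm (τ : DyadicI → DyadicI) (p : ℝ) (X : Type*) [NormedAddCommGroup X]
    [NormedSpace ℝ X] : ℝ≥0∞ :=
  ⨆ (s : Finset DyadicI) (x : DyadicI → X) (_ : HpNormV p s x ≤ 1),
    ENNReal.ofReal (HpNormV p (s.image τ) (rearrCoef τ p s x))

/-- The scalar operator norm `‖T_{τ,p} : H^p → H^p‖ ∈ [0,∞]`. -/
def hpOpNormS (τ : DyadicI → DyadicI) (p : ℝ) : ℝ≥0∞ :=
  ⨆ (s : Finset DyadicI) (a : DyadicI → ℝ) (_ : HpNormS p s a ≤ 1),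
    ENNReal.ofReal (HpNormS p (s.image τ) (rearrCoefS τ p s a))

/-- For `H = τ(L)` (so that `σ(J) = I` for `J = τ(I)`, `I ∈ L`), the maximal function
`μ_H(t) = sup_{J ∈ H} (|σ(J)|/|J|) 1_J(t) = sup_{I ∈ L} (|I|/|τ(I)|) 1_{τ(I)}(t)`,
as an `[0,∞]`-valued function. -/
def muSet (τ : DyadicI → DyadicI) (L : Set DyadicI) (t : ℝ) : ℝ≥0∞ :=
  ⨆ (I : DyadicI) (_ : I ∈ L),
    ENNReal.ofReal (len I / len (τ I) * Set.indicator (toSet (τ I)) (fun _ => (1 : ℝ)) t)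

/-- For `H = τ(L)` with `L` finite, the (real-valued) maximal function
`μ_H(t) = max_{I ∈ L} (|I|/|τ(I)|) 1_{τ(I)}(t)`. -/
def muFin (τ : DyadicI → DyadicI) (L : Finset DyadicI) (t : ℝ) : ℝ :=
  ((L.sup fun I =>
    Real.toNNReal (len I / len (τ I) * Set.indicator (toSet (τ I)) (fun _ => (1 : ℝ)) t) : ℝ≥0) : ℝ)

/-- The point set `L* = ⋃_{I ∈ L} I` covered by a collection of dyadic intervals. -/
def pointSet (L : Set DyadicI) : Set ℝ := ⋃ I ∈ L, toSet I

/-- The constant `C₁ = sup_{H ⊆ τ(D), H ≠ ∅} (1/|σ(H)*|) ∫₀¹ μ_H(t) dt`, where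
nonempty collections `H ⊆ τ(D)` are parametrized as `H = τ(L)` for nonempty `L ⊆ D`,
so that `σ(H)* = L*`. -/
def Cone (τ : DyadicI → DyadicI) : ℝ≥0∞ :=
  ⨆ (L : Set DyadicI) (_ : L.Nonempty),
    (∫⁻ t in Set.Icc (0 : ℝ) 1, muSet τ L t) / volume (pointSet L)

/-- The square of the dyadic BMO norm of `g = ∑_{J ∈ s} a_J h_J`:
`‖g‖_{BMO}² = sup_{I ∈ D} (1/|I|) ∑_{J ⊆ I} a_J² |J|`. -/
def bmoSq (s : Finset DyadicI) (a : DyadicI → ℝ) : ℝ≥0∞ :=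
  ⨆ I : DyadicI, ENNReal.ofReal
    ((∑ J ∈ s.filter fun J => toSet J ⊆ toSet I, a J ^ 2 * len J) / len I)

/-- The coefficients of `S_σ(g)` for `g = ∑_{J ∈ s} a_J h_J`, where `σ = τ⁻¹` on `τ(D)`:
`S_σ(h_J) = h_{σ(J)}` for `J ∈ τ(D)` and `S_σ(h_J) = 0` otherwise, so that the
coefficient of `h_K` in `S_σ(g)` is `a_{τ(K)}` if `τ(K) ∈ s`, and `0` otherwise. -/
def sSigmaCoef (τ : DyadicI → DyadicI) (s : Finset DyadicI) (a : DyadicI → ℝ) :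
    DyadicI → ℝ :=
  fun K => if τ K ∈ s then a (τ K) else 0

/-- The Haar support of `S_σ(g)` for `g` with Haar support `s`:
`σ(s ∩ τ(D))`, i.e. the preimage under `τ` of `s`. -/
def sSigmaSupp (τ : DyadicI → DyadicI) (s : Finset DyadicI) : Finset DyadicI :=
  (s.filter fun J => J ∈ Set.range τ).image (Function.invFun τ)

/-- The operator norm `‖S_σ‖_{BMO} ∈ [0,∞]` of `S_σ` with respect to the dyadic BMO
norm, computed over finitely supported Haar expansions. -/
def bmoOpNorm (τ : DyadicI → DyadicI) : ℝ≥0∞ :=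
  ⨆ (s : Finset DyadicI) (a : DyadicI → ℝ) (_ : bmoSq s a ≤ 1),
    (bmoSq (sSigmaSupp τ s) (sSigmaCoef τ s a)) ^ (1 / 2 : ℝ)

/-- The Carleson constant `⟦C⟧ = sup_{I ∈ C} (1/|I|) ∑_{J ∈ C, J ⊆ I} |J| ∈ [0,∞]`
of a collection of dyadic intervals. -/
def carleson (C : Set DyadicI) : ℝ≥0∞ :=
  ⨆ (I : DyadicI) (_ : I ∈ C),
    (∑' J : {J : DyadicI // J ∈ C ∧ toSet J ⊆ toSet I}, ENNReal.ofReal (len J.1)) /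
      ENNReal.ofReal (len I)

/-- The `L^p_X = L^p([0,1]; X)` (Bochner) norm of `f = ∑_{I ∈ s} x_I h_I`. -/
def LpNormV (p : ℝ) (s : Finset DyadicI) (x : DyadicI → X) : ℝ :=
  (∫ t in Set.Icc (0 : ℝ) 1, ‖∑ I ∈ s, haar I t • x I‖ ^ p) ^ (1 / p)

/-- The operator norm `‖T_{τ,p} ⊗ Id_X : L^p_X → L^p_X‖ ∈ [0,∞]`, computed over
finitely supported Haar expansions. -/
def lpOpNorm (τ : DyadicI → DyadicI) (p : ℝ) (X : Type*) [NormedAddCommGroup X]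
    [NormedSpace ℝ X] : ℝ≥0∞ :=
  ⨆ (s : Finset DyadicI) (x : DyadicI → X) (_ : LpNormV p s x ≤ 1),
    ENNReal.ofReal (LpNormV p (s.image τ) (rearrCoef τ p s x))

/-- The operator norm `‖T_{τ,p}^{-1} ⊗ Id_X‖ ∈ [0,∞]` on the span of
`{h_J : J ∈ τ(D)}` with the `L^p_X` norm: the map determined by
`x h_{τ(I)}/|τ(I)|^{1/p} ↦ x h_I/|I|^{1/p}`, i.e. sending
`g = ∑_{I ∈ L} x_I h_{τ(I)}` to `∑_{I ∈ L} (|τ(I)|/|I|)^{1/p} x_I h_I`. -/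
def lpInvOpNorm (τ : DyadicI → DyadicI) (p : ℝ) (X : Type*) [NormedAddCommGroup X]
    [NormedSpace ℝ X] : ℝ≥0∞ :=
  ⨆ (L : Finset DyadicI) (x : DyadicI → X)
    (_ : LpNormV p (L.image τ) (fun J => ∑ I ∈ L, if τ I = J then x I else 0) ≤ 1),
    ENNReal.ofReal (LpNormV p L fun I => ((len (τ I) / len I) ^ (1 / p)) • x I)

/-- The operator norm `‖T_{τ,1}^{-1}‖₁ ∈ [0,∞]` on the span of `{h_J : J ∈ τ(D)}`
with the dyadic `H¹` norm: the map determined by `h_{τ(I)}/|τ(I)| ↦ h_I/|I|`,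
i.e. sending `g = ∑_{I ∈ L} a_I h_{τ(I)}` to `∑_{I ∈ L} (|τ(I)|/|I|) a_I h_I`. -/
def h1InvOpNorm (τ : DyadicI → DyadicI) : ℝ≥0∞ :=
  ⨆ (L : Finset DyadicI) (a : DyadicI → ℝ)
    (_ : HpNormS 1 (L.image τ) (fun J => ∑ I ∈ L, if τ I = J then a I else 0) ≤ 1),
    ENNReal.ofReal (HpNormS 1 L fun I => (len (τ I) / len I) * a I)

/-- The Rademacher average `(E_ε ‖∑_{i<n} ε_i a_i‖^p)^{1/p}` over all choices of
signs `ε_i ∈ {±1}`. -/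
def radAvg (p : ℝ) {Y : Type*} [NormedAddCommGroup Y] [NormedSpace ℝ Y] (n : ℕ)
    (a : Fin n → Y) : ℝ :=
  ((∑ ε : Fin n → Bool, ‖∑ i, (if ε i then (1 : ℝ) else -1) • a i‖ ^ p) / 2 ^ n) ^ (1 / p)

/-- The type-`p` constant `Type_p(Y) ∈ [0,∞]`: the least `C` such that
`(E_ε ‖∑ ε_i a_i‖^p)^{1/p} ≤ C (∑ ‖a_i‖^p)^{1/p}` for all finite families in `Y`. -/
def typeConst (p : ℝ) (Y : Type*) [NormedAddCommGroup Y] [NormedSpace ℝ Y] : ℝ≥0∞ :=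
  sInf {C : ℝ≥0∞ | ∀ (n : ℕ) (a : Fin n → Y),
    ENNReal.ofReal (radAvg p n a) ≤ C * ENNReal.ofReal ((∑ i, ‖a i‖ ^ p) ^ (1 / p))}

/-- The UMD property of a Banach space `E`: for each `1 < r < ∞` the Haar system is
unconditional in `L^r_E`. -/
def IsUMD (E : Type*) [NormedAddCommGroup E] [NormedSpace ℝ E] : Prop :=
  ∀ r : ℝ, 1 < r → ∃ β : ℝ, ∀ (s : Finset DyadicI) (x : DyadicI → E) (ε : DyadicI → ℝ),
    (∀ I, ε I = 1 ∨ ε I = -1) →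
    LpNormV r s (fun I => ε I • x I) ≤ β * LpNormV r s x

/-- `B` is a block in `L` with top `I`: `B ⊆ L`, `I` is the unique maximal interval
of `B`, and `B` is order-convex in `L` between its elements and `I`. -/
def IsBlock (L : Set DyadicI) (B : Set DyadicI) (I : DyadicI) : Prop :=
  B ⊆ L ∧ I ∈ B ∧ (∀ J ∈ B, toSet J ⊆ toSet I) ∧
    ∀ J ∈ B, ∀ K ∈ L, toSet J ⊆ toSet K → toSet K ⊆ toSet I → K ∈ B

/-- `G₁(K | E)`: the maximal dyadic intervals of `E` strictly contained in `K`. -/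
def gen1 (K : DyadicI) (E : Set DyadicI) : Set DyadicI :=
  {J | J ∈ E ∧ toSet J ⊂ toSet K ∧
    ∀ J' ∈ E, toSet J' ⊂ toSet K → toSet J ⊆ toSet J' → J' = J}

end Defs


section Rad
variable {X : Type*} [NormedAddCommGroup X] [NormedSpace ℝ X]

/-- Rademacher average over `s`. -/
def radN (s : Finset DyadicI) (z : DyadicI → X) : ℝ :=
  Real.sqrt ((∑ ε : {I // I ∈ s} → Bool,
    ‖∑ I ∈ s.attach, (if ε I then (1 : ℝ) else -1) • z I.1‖ ^ 2) / 2 ^ s.card)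

lemma sqFn_eq (s : Finset DyadicI) (x : DyadicI → X) (t : ℝ) :
    sqFn s x t = radN s (fun I => haar I t • x I) := by
  simp only [sqFn, radN, mul_smul]

/-- The vector of all signed sums. -/
def radL (s : Finset DyadicI) (z : DyadicI → X) :
    PiLp 2 (fun _ : ({I // I ∈ s} → Bool) => X) :=
  WithLp.toLp 2 (fun ε => ∑ I ∈ s.attach, (if ε I then (1 : ℝ) else -1) • z I.1)

lemma radN_eq (s : Finset DyadicI) (z : DyadicI → X) :
    radN s z = ‖radL s z‖ / Real.sqrt (2 ^ s.card) := by
  rw [radN, Real.sqrt_div' _ (by positivity), PiLp.norm_eq_of_L2]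
  rfl

lemma radN_nonneg (s : Finset DyadicI) (z : DyadicI → X) : 0 ≤ radN s z := Real.sqrt_nonneg _

lemma radN_add_le (s : Finset DyadicI) (z w : DyadicI → X) :
    radN s (fun I => z I + w I) ≤ radN s z + radN s w := by
  rw [radN_eq, radN_eq, radN_eq, ← add_div]
  gcongr
  have : radL s (fun I => z I + w I) = radL s z + radL s w := by
    ext ε
    simp [radL, smul_add, Finset.sum_add_distrib]
  rw [this]
  exact norm_add_le _ _

lemma radN_smul (s : Finset DyadicI) (c : ℝ) (z : DyadicI → X) :
    radN s (fun I => c • z I) = |c| * radN s z := by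
  rw [radN_eq, radN_eq]
  have : radL s (fun I => c • z I) = c • radL s z := by
    ext ε
    simp only [radL, PiLp.smul_apply, Finset.smul_sum]
    exact Finset.sum_congr rfl fun _ _ => smul_comm _ _ _
  rw [this, norm_smul, Real.norm_eq_abs, mul_div_assoc]

lemma radN_congr (s : Finset DyadicI) {z w : DyadicI → X} (h : ∀ I ∈ s, z I = w I) :
    radN s z = radN s w := by
  unfold radN
  congr 2
  refine Finset.sum_congr rfl fun ε _ => ?_
  congr 2
  exact Finset.sum_congr rfl fun I _ => by rw [h I.1 I.2]

lemma radN_flip (s : Finset DyadicI) (z : DyadicI → X) (J : DyadicI) :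
    radN s (fun I => if I = J then -z I else z I) = radN s z := by
  unfold radN
  congr 2
  have hinv : Function.Involutive
      (fun (ε : {I // I ∈ s} → Bool) (I : {I // I ∈ s}) => if I.1 = J then !(ε I) else ε I) := by
    intro ε
    funext I
    by_cases h : I.1 = J <;> simp [h]
  refine Fintype.sum_equiv hinv.toPerm _ _ fun ε => ?_
  congr 2
  refine Finset.sum_congr rfl fun I _ => ?_
  simp only [Function.Involutive.coe_toPerm]
  by_cases h : I.1 = J
  · rcases Bool.eq_false_or_eq_true (ε I) with hε | hε <;> simp [h, hε]
  · simp [h]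

lemma radN_contr_one (s : Finset DyadicI) (z : DyadicI → X) (J : DyadicI) (c : ℝ)
    (hc : |c| ≤ 1) :
    radN s (fun I => if I = J then c • z I else z I) ≤ radN s z := by
  have hc' := abs_le.1 hc
  have h1 : (fun I => if I = J then c • z I else z I) =
      fun I => ((1 + c) / 2) • z I + ((1 - c) / 2) • (if I = J then -z I else z I) := by
    funext I
    split_ifs
    · rw [smul_neg, ← sub_eq_add_neg, ← sub_smul]; congr 1; ring
    · rw [← add_smul]; ring_nf; simp
  rw [h1]
  refine (radN_add_le _ _ _).trans ?_
  rw [radN_smul, radN_smul, radN_flip, abs_of_nonneg (by linarith), abs_of_nonneg (by linarith)]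
  apply le_of_eq; ring

lemma radN_contr1 (s : Finset DyadicI) (z : DyadicI → X) (c : DyadicI → ℝ)
    (hc : ∀ I ∈ s, |c I| ≤ 1) :
    radN s (fun I => c I • z I) ≤ radN s z := by
  have key : ∀ A : Finset DyadicI, A ⊆ s →
      radN s (fun I => if I ∈ A then c I • z I else z I) ≤ radN s z := by
    intro A
    induction A using Finset.induction_on with
    | empty => simp
    | insert J A hJ ih =>
      intro hA
      refine le_trans (le_of_eq ?_) ((radN_contr_one s
        (fun I => if I ∈ A then c I • z I else z I) J (c J)
        (hc J (hA (Finset.mem_insert_self _ _)))).trans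
        (ih ((Finset.subset_insert _ _).trans hA)))
      congr 1
      funext I
      by_cases h : I = J
      · subst h; simp [hJ]
      · simp [h]
  refine le_trans (le_of_eq ?_) (key s subset_rfl)
  exact radN_congr s fun I hI => by simp [hI]

lemma radN_contr (s : Finset DyadicI) (z : DyadicI → X) (c : DyadicI → ℝ) (Λ : ℝ) (hΛ : 0 ≤ Λ)
    (hc : ∀ I ∈ s, |c I| ≤ Λ) :
    radN s (fun I => c I • z I) ≤ Λ * radN s z := by
  have h := radN_contr1 s (fun I => Λ • z I) (fun I => c I / Λ) (fun I hI => by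
    rw [abs_div, abs_of_nonneg hΛ]
    exact div_le_one_of_le₀ (hc I hI) hΛ)
  rw [radN_smul, abs_of_nonneg hΛ] at h
  refine le_trans (le_of_eq ?_) h
  refine radN_congr s fun I hI => ?_
  rcases hΛ.eq_or_lt with h0 | h0
  · have := hc I hI
    rw [← h0, abs_nonpos_iff] at this
    simp [this]
  · rw [smul_smul, div_mul_cancel₀ _ h0.ne']

lemma radN_single (s : Finset DyadicI) (z : DyadicI → X) (J : DyadicI) (hJ : J ∈ s) :
    ‖z J‖ ≤ radN s z := by
  have h := radN_contr1 s z (fun I => if I = J then 1 else 0) (fun I _ => by split_ifs <;> simp)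
  refine le_trans (le_of_eq ?_) h
  unfold radN
  have : ∀ ε : {I // I ∈ s} → Bool, ‖∑ I ∈ s.attach, (if ε I then (1 : ℝ) else -1) •
      ((if I.1 = J then (1 : ℝ) else 0) • z I.1)‖ = ‖z J‖ := by
    intro ε
    rw [Finset.sum_eq_single (⟨J, hJ⟩ : {I // I ∈ s})]
    · split_ifs <;> simp_all
    · intro b _ hb
      have : b.1 ≠ J := fun h => hb (Subtype.ext h)
      simp [this]
    · simp
  simp only [this]
  simp

lemma radN_scalar (s : Finset DyadicI) (a : DyadicI → ℝ) (e : X) (he : ‖e‖ = 1) :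
    radN s (fun I => a I • e) = Real.sqrt (∑ I ∈ s, a I ^ 2) := by
  unfold radN
  congr 1
  rw [div_eq_iff (by positivity)]
  have h1 : ∀ ε : {I // I ∈ s} → Bool, ‖∑ I ∈ s.attach, (if ε I then (1 : ℝ) else -1) •
      (a I.1 • e)‖ ^ 2 = ∑ I : {I // I ∈ s}, ∑ J : {I // I ∈ s}, (a I.1 * a J.1) *
        ((if ε I then (1 : ℝ) else -1) * (if ε J then (1 : ℝ) else -1)) := by
    intro ε
    simp only [smul_smul]
    rw [← Finset.sum_smul, norm_smul, he, mul_one, Real.norm_eq_abs, sq_abs, sq,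
      ← Finset.univ_eq_attach, Finset.sum_mul_sum]
    refine Finset.sum_congr rfl fun _ _ => Finset.sum_congr rfl fun _ _ => by ring
  simp only [h1]
  rw [Finset.sum_comm, Finset.sum_mul, ← Finset.sum_attach s, Finset.univ_eq_attach]
  refine Finset.sum_congr rfl fun I _ => ?_
  rw [Finset.sum_comm, Finset.sum_eq_single I]
  · have : ∀ ε : {I // I ∈ s} → Bool,
      ((if ε I then (1 : ℝ) else -1) * (if ε I then (1 : ℝ) else -1)) = 1 := by
      intro ε; split_ifs <;> norm_num
    simp only [this]
    simp
    ring
  · intro J _ hJ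
    have hinv : Function.Involutive
        (fun (ε : {I // I ∈ s} → Bool) => Function.update ε I (!(ε I))) := by
      intro ε
      simp
    have h2 : ∑ ε : {I // I ∈ s} → Bool, (a I.1 * a J.1) *
        ((if ε I then (1 : ℝ) else -1) * (if ε J then (1 : ℝ) else -1)) =
        ∑ ε : {I // I ∈ s} → Bool, -((a I.1 * a J.1) *
        ((if ε I then (1 : ℝ) else -1) * (if ε J then (1 : ℝ) else -1))) := by
      refine Fintype.sum_equiv hinv.toPerm _ _ fun ε => ?_
      simp only [Function.Involutive.coe_toPerm, Function.update_self,
        Function.update_of_ne hJ]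
      cases ε I <;> cases ε J <;> simp
    rw [Finset.sum_neg_distrib] at h2
    linarith
  · simp

end Rad

section Geom

lemma DyadicI.len_pos (I : DyadicI) : 0 < I.len := by unfold DyadicI.len; positivity

lemma DyadicI.len_eq (I : DyadicI) : I.len = 1 / 2 ^ I.n := by
  unfold DyadicI.len; rw [zpow_neg, zpow_natCast, one_div]

lemma DyadicI.mem_iff (I : DyadicI) (t : ℝ) :
    t ∈ toSet I ↔ (I.k : ℝ) ≤ t * 2 ^ I.n ∧ t * 2 ^ I.n < I.k + 1 := by
  unfold DyadicI.toSet DyadicI.lep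
  rw [DyadicI.len_eq, Set.mem_Ico]
  have : (0 : ℝ) < 2 ^ I.n := by positivity
  have h1 : (I.k : ℝ) * (1 / 2 ^ I.n) = I.k / 2 ^ I.n := by ring
  have h2 : (I.k : ℝ) * (1 / 2 ^ I.n) + 1 / 2 ^ I.n = (I.k + 1) / 2 ^ I.n := by ring
  rw [h2, h1, div_le_iff₀ this, lt_div_iff₀ this]

lemma DyadicI.lep_mem (I : DyadicI) : I.lep ∈ toSet I := by
  unfold DyadicI.toSet
  exact ⟨le_rfl, by linarith [I.len_pos]⟩

lemma DyadicI.nest {I K : DyadicI} (h : K.n ≤ I.n) {t u : ℝ} (ht : t ∈ toSet I) (hu : u ∈ toSet I)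
    (htK : t ∈ toSet K) : u ∈ toSet K := by
  rw [DyadicI.mem_iff] at *
  obtain ⟨d, hd⟩ := Nat.exists_eq_add_of_le h
  rw [hd, pow_add, ← mul_assoc] at ht hu
  have hp : (0 : ℝ) < 2 ^ d := by positivity
  have h1 : (K.k : ℝ) * 2 ^ d < I.k + 1 :=
    lt_of_le_of_lt (mul_le_mul_of_nonneg_right htK.1 hp.le) ht.2
  have h2 : (I.k : ℝ) < (K.k + 1) * 2 ^ d :=
    lt_of_le_of_lt ht.1 (mul_lt_mul_of_pos_right htK.2 hp)
  have h1' : K.k * 2 ^ d ≤ I.k := by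
    have : K.k * 2 ^ d < I.k + 1 := by exact_mod_cast h1
    omega
  have h2' : I.k + 1 ≤ (K.k + 1) * 2 ^ d := by
    have : I.k < (K.k + 1) * 2 ^ d := by exact_mod_cast h2
    omega
  have h1'' : (K.k : ℝ) * 2 ^ d ≤ I.k := by exact_mod_cast h1'
  have h2'' : (I.k : ℝ) + 1 ≤ (K.k + 1) * 2 ^ d := by exact_mod_cast h2'
  constructor
  · exact le_of_mul_le_mul_right (h1''.trans hu.1) hp
  · exact lt_of_mul_lt_mul_right (hu.2.trans_le h2'') hp.le

lemma DyadicI.eq_of {I K : DyadicI} (h : K.n = I.n) {t : ℝ} (ht : t ∈ toSet I)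
    (htK : t ∈ toSet K) : I = K := by
  rw [DyadicI.mem_iff] at *
  rw [h] at htK
  have h1 : (K.k : ℝ) < I.k + 1 := htK.1.trans_lt ht.2
  have h2 : (I.k : ℝ) < K.k + 1 := ht.1.trans_lt htK.2
  have h1' : K.k < I.k + 1 := by exact_mod_cast h1
  have h2' : I.k < K.k + 1 := by exact_mod_cast h2
  have h3 : K.k = I.k := by omega
  cases I; cases K; simp_all

/-- `I ⊆ K`. -/
def DyadicI.sub (I K : DyadicI) : Prop := K.n ≤ I.n ∧ I.lep ∈ toSet K

lemma DyadicI.sub_iff {I K : DyadicI} {t : ℝ} (ht : t ∈ toSet I) :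
    DyadicI.sub I K ↔ t ∈ toSet K ∧ K.n ≤ I.n := by
  constructor
  · rintro ⟨h, h'⟩
    exact ⟨DyadicI.nest h I.lep_mem ht h', h⟩
  · rintro ⟨h, h'⟩
    exact ⟨h', DyadicI.nest h' ht I.lep_mem h⟩

lemma DyadicI.haar_sq (I : DyadicI) (t : ℝ) :
    haar I t * haar I t = if t ∈ toSet I then 1 else 0 := by
  have := I.len_pos
  unfold DyadicI.haar DyadicI.toSet
  by_cases h1 : t ∈ Set.Ico I.lep (I.lep + I.len / 2)
  · have : t ∈ Set.Ico I.lep (I.lep + I.len) := ⟨h1.1, by linarith [h1.2]⟩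
    simp [h1, this]
  · by_cases h2 : t ∈ Set.Ico (I.lep + I.len / 2) (I.lep + I.len)
    · have : t ∈ Set.Ico I.lep (I.lep + I.len) := ⟨by linarith [h2.1], h2.2⟩
      simp [h1, h2, this]
    · have : t ∉ Set.Ico I.lep (I.lep + I.len) := by
        intro h
        by_cases h3 : t < I.lep + I.len / 2
        · exact h1 ⟨h.1, h3⟩
        · exact h2 ⟨not_lt.1 h3, h.2⟩
      simp [h1, h2, this]

lemma DyadicI.abs_haar_le (I : DyadicI) (t : ℝ) : |haar I t| ≤ 1 := by
  unfold DyadicI.haar; split_ifs <;> simp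

lemma DyadicI.toSet_subset (I : DyadicI) : toSet I ⊆ Set.Icc 0 1 := by
  intro t ht
  rw [DyadicI.mem_iff] at ht
  have hp : (0 : ℝ) < 2 ^ I.n := by positivity
  have hk : (I.k : ℝ) + 1 ≤ 2 ^ I.n := by exact_mod_cast I.hk
  constructor
  · have : (0 : ℝ) * 2 ^ I.n ≤ t * 2 ^ I.n := by
      rw [zero_mul]; exact le_trans (by positivity) ht.1
    exact le_of_mul_le_mul_right this hp
  · have : t * 2 ^ I.n ≤ 1 * 2 ^ I.n := by linarith
    exact le_of_mul_le_mul_right this hp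

end Geom

section Pointwise
variable {X : Type*} [NormedAddCommGroup X] [NormedSpace ℝ X]

lemma sqFn_ind (s : Finset DyadicI) (x : DyadicI → X) (t : ℝ) :
    sqFn s x t = radN s (fun I => if t ∈ toSet I then x I else 0) := by
  rw [sqFn_eq]
  apply le_antisymm
  · refine le_trans (le_of_eq ?_) (radN_contr1 s (fun I => if t ∈ toSet I then x I else 0)
      (fun I => haar I t) fun I _ => I.abs_haar_le t)
    refine radN_congr s fun I _ => ?_
    have := I.haar_sq t
    split_ifs at this ⊢ with h
    · rfl
    · rw [mul_self_eq_zero] at this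
      simp [this]
  · refine le_trans (le_of_eq ?_) (radN_contr1 s (fun I => haar I t • x I)
      (fun I => haar I t) fun I _ => I.abs_haar_le t)
    refine radN_congr s fun I _ => ?_
    rw [smul_smul, I.haar_sq t]
    split_ifs <;> simp

lemma sqFn_nonneg (s : Finset DyadicI) (x : DyadicI → X) (t : ℝ) : 0 ≤ sqFn s x t :=
  Real.sqrt_nonneg _

/-- The stopped square function, constant on `I`. -/
def stF (s : Finset DyadicI) (x : DyadicI → X) (I : DyadicI) : ℝ :=
  radN s (fun K => if DyadicI.sub I K then x K else 0)

lemma radN_ite_le (s : Finset DyadicI) (x : DyadicI → X) (P Q : DyadicI → Prop) [DecidablePred P] [DecidablePred Q]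
    (h : ∀ I, P I → Q I) :
    radN s (fun K => if P K then x K else 0) ≤ radN s (fun K => if Q K then x K else 0) := by
  refine le_trans (le_of_eq ?_) (radN_contr1 s (fun I => if Q I then x I else 0)
      (fun I => if P I then 1 else 0) fun I _ => by split_ifs <;> simp)
  refine radN_congr s fun I _ => ?_
  by_cases hP : P I
  · simp [hP, h I hP]
  · simp [hP]

lemma stF_nonneg (s : Finset DyadicI) (x : DyadicI → X) (I : DyadicI) : 0 ≤ stF s x I :=
  radN_nonneg _ _

lemma stF_le_sqFn (s : Finset DyadicI) (x : DyadicI → X) (I : DyadicI) (t : ℝ)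
    (ht : t ∈ toSet I) : stF s x I ≤ sqFn s x t := by
  rw [sqFn_ind]
  exact radN_ite_le s x _ _ fun K hK => ((DyadicI.sub_iff ht).1 hK).1

lemma stF_zero (s : Finset DyadicI) (x : DyadicI → X) (I : DyadicI) (hI : I ∈ s)
    (h : stF s x I = 0) : x I = 0 := by
  have := radN_single s (fun K => if DyadicI.sub I K then x K else 0) I hI
  rw [if_pos ⟨le_rfl, I.lep_mem⟩] at this
  unfold stF at h
  rw [h] at this
  exact norm_le_zero_iff.1 this

lemma abel_scalar {u v θ : ℝ} (hθ : 0 < θ) (hθ1 : θ < 1) (hu : 0 < u) (huv : u ≤ v) :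
    |u ^ (-(1 - θ)) - v ^ (-(1 - θ))| * u ≤ (1 - θ) / θ * (v ^ θ - u ^ θ) := by
  have hv : 0 < v := hu.trans_le huv
  have h1 : v ^ (-(1 - θ)) ≤ u ^ (-(1 - θ)) :=
    Real.rpow_le_rpow_of_nonpos hu huv (by linarith)
  rw [abs_of_nonneg (by linarith)]
  set L := Real.log v - Real.log u with hL
  have hL0 : 0 ≤ L := by rw [hL]; linarith [Real.log_le_log hu huv]
  have e1 : u ^ (-(1 - θ)) * u = u ^ θ := by
    nth_rewrite 2 [← Real.rpow_one u]
    rw [← Real.rpow_add hu]; congr 1; ring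
  have e2 : v ^ (-(1 - θ)) * u = u ^ θ * Real.exp (-(1 - θ) * L) := by
    rw [Real.rpow_def_of_pos hv, Real.rpow_def_of_pos hu, ← Real.exp_add]
    nth_rewrite 1 [← Real.exp_log hu]
    rw [← Real.exp_add]; congr 1; rw [hL]; ring
  have e3 : v ^ θ = u ^ θ * Real.exp (θ * L) := by
    rw [Real.rpow_def_of_pos hv, Real.rpow_def_of_pos hu, ← Real.exp_add]
    congr 1; rw [hL]; ring
  have i1 := Real.add_one_le_exp (-(1 - θ) * L)
  have i2 := Real.add_one_le_exp (θ * L)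
  have hU : 0 < u ^ θ := by positivity
  rw [sub_mul, e1, e2, e3]
  have : (1 - θ) * L ≤ (1 - θ) / θ * (Real.exp (θ * L) - 1) := by
    calc (1 - θ) * L = (1 - θ) / θ * (θ * L) := by field_simp
      _ ≤ _ := by
        apply mul_le_mul_of_nonneg_left _ (div_nonneg (by linarith) hθ.le)
        linarith
  have h5 : 1 - Real.exp (-(1 - θ) * L) ≤ (1 - θ) / θ * (Real.exp (θ * L) - 1) := by linarith
  calc u ^ θ - u ^ θ * Real.exp (-(1 - θ) * L) = u ^ θ * (1 - Real.exp (-(1 - θ) * L)) := by ring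
    _ ≤ u ^ θ * ((1 - θ) / θ * (Real.exp (θ * L) - 1)) := mul_le_mul_of_nonneg_left h5 hU.le
    _ = _ := by ring


lemma yBound (s : Finset DyadicI) (x : DyadicI → X) {θ : ℝ} (hθ : 0 < θ) (hθ1 : θ < 1) (t : ℝ) :
    sqFn s (fun I => (stF s x I) ^ (-(1 - θ)) • x I) t ≤
      ((1 - θ) / θ + 1) * sqFn s x t ^ θ := by
  set Xn : ℕ → DyadicI → X := fun n I => if t ∈ toSet I ∧ I.n ≤ n then x I else 0 with hXn
  set Φ : ℕ → ℝ := fun n => radN s (Xn n) with hΦ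
  set c : ℕ → ℝ := fun n => Φ n ^ (-(1 - θ)) with hc
  set Z : ℕ → DyadicI → X := fun n I => (c I.n - c n) • Xn n I with hZ
  have hΦ0 : ∀ n, 0 ≤ Φ n := fun n => radN_nonneg _ _
  have hmono : ∀ n, Φ n ≤ Φ (n + 1) := fun n =>
    radN_ite_le s x _ _ fun K hK => ⟨hK.1, hK.2.trans (Nat.le_succ n)⟩
  have hθ2 : 0 ≤ (1 - θ) / θ := div_nonneg (by linarith) hθ.le
  have key : ∀ n, radN s (Z n) ≤ (1 - θ) / θ * Φ n ^ θ := by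
    intro n
    induction n with
    | zero =>
      have : radN s (Z 0) = radN s (fun I => (0 : ℝ) • Xn 0 I) := by
        refine radN_congr s fun I _ => ?_
        simp only [hZ, hXn]
        split_ifs with h
        · have : I.n = 0 := by omega
          simp [this]
        · simp
      rw [this, radN_smul]
      simp only [abs_zero, zero_mul]
      exact mul_nonneg hθ2 (Real.rpow_nonneg (hΦ0 0) _)
    | succ n ih =>
      have h1 : Z (n + 1) = fun I => Z n I + (c n - c (n + 1)) • Xn n I := by
        funext I
        simp only [hZ, hXn]
        by_cases hI : t ∈ toSet I
        · rcases Nat.lt_or_ge n I.n with h | h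
          · rcases Nat.lt_or_ge (n + 1) I.n with h' | h'
            · have a1 : ¬ I.n ≤ n := by omega
              have a2 : ¬ I.n ≤ n + 1 := by omega
              simp [a1, a2]
            · have a1 : ¬ I.n ≤ n := by omega
              have a2 : I.n = n + 1 := by omega
              simp [a2]
          · have a2 : I.n ≤ n + 1 := by omega
            simp only [hI, h, a2, and_self, if_true]
            rw [← add_smul]; congr 1; ring
        · simp [hI]
      rw [h1]
      refine (radN_add_le _ _ _).trans ?_
      rw [radN_smul]
      have h2 : |c n - c (n + 1)| * Φ n ≤ (1 - θ) / θ * (Φ (n + 1) ^ θ - Φ n ^ θ) := by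
        rcases (hΦ0 n).eq_or_lt with h | h
        · rw [← h, mul_zero, Real.zero_rpow hθ.ne', sub_zero]
          exact mul_nonneg hθ2 (Real.rpow_nonneg (hΦ0 _) _)
        · exact abel_scalar hθ hθ1 h (hmono n)
      have h3 : radN s (Xn n) = Φ n := rfl
      rw [h3]
      linarith
  obtain ⟨N, hN⟩ : ∃ N, ∀ I ∈ s, I.n ≤ N := ⟨s.sup DyadicI.n, fun I hI => Finset.le_sup hI⟩
  have hΦN : sqFn s x t = Φ N := by
    rw [sqFn_ind]
    refine radN_congr s fun I hI => ?_
    simp [hXn, hN I hI]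
  have hst : ∀ I, t ∈ toSet I → stF s x I = Φ I.n := by
    intro I hI
    refine radN_congr s fun K _ => ?_
    simp only [hXn, DyadicI.sub_iff hI]
  have hy : sqFn s (fun I => (stF s x I) ^ (-(1 - θ)) • x I) t =
      radN s (fun I => Z N I + c N • Xn N I) := by
    rw [sqFn_ind]
    refine radN_congr s fun I hI => ?_
    simp only [hZ, hXn]
    by_cases h : t ∈ toSet I
    · simp only [h, hN I hI, and_self, if_true]
      rw [← add_smul, hst I h]
      change c I.n • x I = _
      congr 1
      ring
    · simp [h]
  rw [hy, hΦN]
  refine (radN_add_le _ _ _).trans ?_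
  rw [radN_smul]
  have h4 : |c N| * radN s (Xn N) ≤ Φ N ^ θ := by
    change |c N| * Φ N ≤ _
    rcases (hΦ0 N).eq_or_lt with h | h
    · rw [← h, mul_zero, Real.zero_rpow hθ.ne']
    · rw [abs_of_nonneg (Real.rpow_nonneg h.le _)]
      apply le_of_eq
      change Φ N ^ (-(1 - θ)) * Φ N = _
      nth_rewrite 2 [← Real.rpow_one (Φ N)]
      rw [← Real.rpow_add h]; congr 1; ring
  linarith [key N]

end Pointwise

section Integ

/-- Nonnegative bounded measurable functions. -/
structure Nice (f : ℝ → ℝ) : Prop where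
  meas : Measurable f
  nonneg : ∀ t, 0 ≤ f t
  bdd : ∃ C, ∀ t, f t ≤ C

lemma Nice.rpow {f : ℝ → ℝ} (hf : Nice f) {r : ℝ} (hr : 0 ≤ r) : Nice (fun t => f t ^ r) := by
  obtain ⟨C, hC⟩ := hf.bdd
  exact ⟨hf.meas.pow_const r, fun t => Real.rpow_nonneg (hf.nonneg t) _,
    C ^ r, fun t => Real.rpow_le_rpow (hf.nonneg t) (hC t) hr⟩

lemma Nice.memLp {f : ℝ → ℝ} (hf : Nice f) (r : ℝ≥0∞) :
    MemLp f r (volume.restrict (Set.Icc (0 : ℝ) 1)) := by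
  obtain ⟨C, hC⟩ := hf.bdd
  refine MemLp.of_bound hf.meas.aestronglyMeasurable C (Filter.Eventually.of_forall fun t => ?_)
  rw [Real.norm_eq_abs, abs_of_nonneg (hf.nonneg t)]
  exact hC t

lemma Nice.int {f : ℝ → ℝ} (hf : Nice f) :
    Integrable f (volume.restrict (Set.Icc (0 : ℝ) 1)) :=
  memLp_one_iff_integrable.1 (hf.memLp 1)

lemma Nice.mul {f g : ℝ → ℝ} (hf : Nice f) (hg : Nice g) : Nice (fun t => f t * g t) := by
  obtain ⟨C, hC⟩ := hf.bdd
  obtain ⟨D, hD⟩ := hg.bdd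
  exact ⟨hf.meas.mul hg.meas, fun t => mul_nonneg (hf.nonneg t) (hg.nonneg t),
    C * D, fun t => mul_le_mul (hC t) (hD t) (hg.nonneg t) ((hf.nonneg t).trans (hC t))⟩

lemma Nice.const_mul {f : ℝ → ℝ} (hf : Nice f) {c : ℝ} (hc : 0 ≤ c) :
    Nice (fun t => c * f t) :=
  Nice.mul ⟨measurable_const, fun _ => hc, c, fun _ => le_rfl⟩ hf

lemma Nice.integral_nonneg {f : ℝ → ℝ} (hf : Nice f) : 0 ≤ ∫ t in Set.Icc (0 : ℝ) 1, f t :=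
  MeasureTheory.integral_nonneg hf.nonneg

lemma Nice.integral_mono {f g : ℝ → ℝ} (hf : Nice f) (hg : Nice g) (h : ∀ t, f t ≤ g t) :
    ∫ t in Set.Icc (0 : ℝ) 1, f t ≤ ∫ t in Set.Icc (0 : ℝ) 1, g t :=
  MeasureTheory.integral_mono hf.int hg.int h

lemma Nice.holder {f g : ℝ → ℝ} (hf : Nice f) (hg : Nice g) {θ : ℝ} (h0 : 0 < θ) (h1 : θ < 1) :
    ∫ t in Set.Icc (0 : ℝ) 1, f t ^ θ * g t ^ (1 - θ) ≤
      (∫ t in Set.Icc (0 : ℝ) 1, f t) ^ θ * (∫ t in Set.Icc (0 : ℝ) 1, g t) ^ (1 - θ) := by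
  have h1' : 0 < 1 - θ := by linarith
  have hpq : (1 / θ).HolderConjugate (1 / (1 - θ)) := by
    rw [Real.holderConjugate_iff]
    refine ⟨by rw [lt_div_iff₀ h0]; linarith, ?_⟩
    simp
  have := integral_mul_le_Lp_mul_Lq_of_nonneg hpq
    (μ := volume.restrict (Set.Icc (0 : ℝ) 1))
    (Filter.Eventually.of_forall (hf.rpow h0.le).nonneg)
    (Filter.Eventually.of_forall (hg.rpow h1'.le).nonneg)
    ((hf.rpow h0.le).memLp _) ((hg.rpow h1'.le).memLp _)
  have e1 : ∀ t, (f t ^ θ) ^ (1 / θ) = f t := fun t => by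
    rw [← Real.rpow_mul (hf.nonneg t), mul_one_div_cancel h0.ne', Real.rpow_one]
  have e2 : ∀ t, (g t ^ (1 - θ)) ^ (1 / (1 - θ)) = g t := fun t => by
    rw [← Real.rpow_mul (hg.nonneg t), mul_one_div_cancel h1'.ne', Real.rpow_one]
  simp only [e1, e2, one_div_one_div] at this
  exact this

lemma DyadicI.measurableSet (I : DyadicI) : MeasurableSet (toSet I) := measurableSet_Ico

lemma nice_sum_ind (R : Finset DyadicI) (σ : DyadicI → DyadicI) (w : DyadicI → ℝ)
    (hw : ∀ I, 0 ≤ w I) : Nice (fun t => ∑ I ∈ R, if t ∈ toSet (σ I) then w I else 0) := by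
  refine ⟨?_, fun t => Finset.sum_nonneg fun I _ => ?_, ∑ I ∈ R, w I, fun t =>
    Finset.sum_le_sum fun I _ => ?_⟩
  · refine Finset.measurable_sum _ fun I _ => ?_
    exact Measurable.ite (σ I).measurableSet measurable_const measurable_const
  · split_ifs
    · exact hw I
    · exact le_rfl
  · split_ifs
    · exact le_rfl
    · exact hw I

lemma integral_sum_ind (R : Finset DyadicI) (σ : DyadicI → DyadicI) (w : DyadicI → ℝ)
    (hw : ∀ I, 0 ≤ w I) :
    ∫ t in Set.Icc (0 : ℝ) 1, (∑ I ∈ R, if t ∈ toSet (σ I) then w I else 0) =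
      ∑ I ∈ R, w I * len (σ I) := by
  rw [integral_finsetSum]
  · refine Finset.sum_congr rfl fun I _ => ?_
    have : (fun t => if t ∈ toSet (σ I) then w I else 0) =
        Set.indicator (toSet (σ I)) (fun _ => w I) := by
      funext t; simp [Set.indicator]
    rw [this, integral_indicator (σ I).measurableSet, Measure.restrict_restrict
      (σ I).measurableSet, Set.inter_eq_left.2 (σ I).toSet_subset]
    rw [setIntegral_const, smul_eq_mul, mul_comm]
    congr 1
    unfold DyadicI.toSet
    rw [Measure.real, Real.volume_Ico, add_sub_cancel_left, ENNReal.toReal_ofReal (σ I).len_pos.le]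
  · intro I _
    have := nice_sum_ind {I} σ w hw
    simpa using this.int

variable {X : Type*} [NormedAddCommGroup X] [NormedSpace ℝ X]

lemma DyadicI.haar_meas (I : DyadicI) : Measurable (haar I) := by
  unfold DyadicI.haar
  exact Measurable.ite measurableSet_Ico measurable_const
    (Measurable.ite measurableSet_Ico measurable_const measurable_const)

lemma sqFn_nice (s : Finset DyadicI) (x : DyadicI → X) : Nice (sqFn s x) := by
  refine ⟨?_, sqFn_nonneg s x, radN s x, fun t => ?_⟩
  · unfold sqFn
    refine Measurable.sqrt (Measurable.div_const (Finset.measurable_sum _ fun ε _ => ?_) _)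
    refine Measurable.pow_const (StronglyMeasurable.measurable (StronglyMeasurable.norm ?_)) 2
    refine Finset.stronglyMeasurable_fun_sum _ fun I _ => ?_
    exact StronglyMeasurable.smul_const
      (Measurable.stronglyMeasurable (I.1.haar_meas.const_mul _)) _
  · rw [sqFn_eq]
    exact radN_contr1 s x (fun I => haar I t) fun I _ => I.abs_haar_le t

/-- `∫ 𝕊(f)^p`. -/
def Jp (p : ℝ) (s : Finset DyadicI) (x : DyadicI → X) : ℝ :=
  ∫ t in Set.Icc (0 : ℝ) 1, sqFn s x t ^ p

lemma Jp_nonneg {p : ℝ} (hp : 0 < p) (s : Finset DyadicI) (x : DyadicI → X) : 0 ≤ Jp p s x :=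
  ((sqFn_nice s x).rpow hp.le).integral_nonneg

lemma Jp_smul {p : ℝ} (s : Finset DyadicI) (x : DyadicI → X) {c : ℝ} (hc : 0 ≤ c) :
    Jp p s (fun I => c • x I) = c ^ p * Jp p s x := by
  unfold Jp
  rw [← integral_const_mul]
  congr 1
  funext t
  have : sqFn s (fun I => c • x I) t = c * sqFn s x t := by
    rw [sqFn_eq, sqFn_eq, ← abs_of_nonneg hc, ← radN_smul, abs_of_nonneg hc]
    exact radN_congr s fun I _ => smul_comm _ _ _
  rw [this, Real.mul_rpow hc (sqFn_nonneg _ _ _)]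

lemma rearrCoef_smul (τ : DyadicI → DyadicI) (p : ℝ) (s : Finset DyadicI) (x : DyadicI → X)
    (c : ℝ) : rearrCoef τ p s (fun I => c • x I) = fun J => c • rearrCoef τ p s x J := by
  funext J
  unfold rearrCoef
  rw [Finset.smul_sum]
  refine Finset.sum_congr rfl fun I _ => ?_
  split_ifs
  · exact smul_comm _ _ _
  · simp

lemma rearrCoef_apply (τ : DyadicI → DyadicI) (hτ : Function.Injective τ) (p : ℝ)
    (s : Finset DyadicI) (x : DyadicI → X) (I : DyadicI) (hI : I ∈ s) :
    rearrCoef τ p s x (τ I) = ((len I / len (τ I)) ^ (1 / p)) • x I := by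
  unfold rearrCoef
  rw [Finset.sum_eq_single I]
  · simp
  · intro J _ hJ
    rw [if_neg fun h => hJ (hτ h)]
  · exact fun h => absurd hI h

lemma op_bound {p : ℝ} (hp : 0 < p) (τ : DyadicI → DyadicI) (hfin : hpOpNorm τ p X ≠ ⊤)
    (s : Finset DyadicI) (x : DyadicI → X) :
    Jp p (s.image τ) (rearrCoef τ p s x) ≤ (hpOpNorm τ p X).toReal ^ p * Jp p s x := by
  set K := (hpOpNorm τ p X).toReal with hK
  have hK0 : 0 ≤ K := ENNReal.toReal_nonneg
  set J0 := Jp p s x with hJ0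
  have hJ0n : 0 ≤ J0 := Jp_nonneg hp s x
  set J1 := Jp p (s.image τ) (rearrCoef τ p s x) with hJ1
  have hJ1n : 0 ≤ J1 := Jp_nonneg hp _ _
  have key : ∀ M : ℝ, 0 < M → M * J0 ≤ 1 → M * J1 ≤ K ^ p := by
    intro M hM h
    set c := M ^ (1 / p) with hc
    have hc0 : 0 ≤ c := Real.rpow_nonneg hM.le _
    have hcp : c ^ p = M := by
      rw [hc, ← Real.rpow_mul hM.le, one_div_mul_cancel hp.ne', Real.rpow_one]
    have h1 : HpNormV p s (fun I => c • x I) ≤ 1 := by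
      change (Jp p s (fun I => c • x I)) ^ (1 / p) ≤ 1
      rw [Jp_smul s x hc0, hcp]
      exact Real.rpow_le_one (by positivity) h (by positivity)
    have h2 : ENNReal.ofReal (HpNormV p (s.image τ) (rearrCoef τ p s (fun I => c • x I))) ≤
        hpOpNorm τ p X := by
      unfold hpOpNorm
      exact le_iSup_of_le s (le_iSup_of_le (fun I => c • x I) (le_iSup_of_le h1 le_rfl))
    rw [← ENNReal.ofReal_toReal hfin, ENNReal.ofReal_le_ofReal_iff hK0] at h2
    change (Jp p (s.image τ) (rearrCoef τ p s (fun I => c • x I))) ^ (1 / p) ≤ K at h2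
    rw [rearrCoef_smul, Jp_smul _ _ hc0, hcp] at h2
    have h3 := Real.rpow_le_rpow (by positivity) h2 hp.le
    rwa [← Real.rpow_mul (by positivity), one_div_mul_cancel hp.ne', Real.rpow_one] at h3
  rcases hJ0n.eq_or_lt with h | h
  · rw [← h, mul_zero]
    by_contra hcon
    push Not at hcon
    have h4 := key ((K ^ p + 1) / J1) (by positivity) (by rw [← h]; simp)
    rw [div_mul_cancel₀ _ hcon.ne'] at h4
    linarith
  · have h4 := key (1 / J0) (by positivity) (by rw [one_div_mul_cancel h.ne'])
    rw [one_div, inv_mul_le_iff₀ h] at h4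
    linarith

end Integ

section Records

lemma sum_two_pow {ι : Type*} (A : Finset ι) (e : ι → ℤ) (he : Set.InjOn e A)
    (hA : A.Nonempty) : ∃ j ∈ A, ∑ i ∈ A, (2 : ℝ) ^ e i ≤ 2 * 2 ^ e j := by
  induction A using Finset.induction_on_max_value e with
  | empty => exact absurd hA (by simp)
  | insert a s ha hmax ih =>
    refine ⟨a, Finset.mem_insert_self _ _, ?_⟩
    rw [Finset.sum_insert ha]
    rcases s.eq_empty_or_nonempty with h | h
    · subst h
      have : (0 : ℝ) < 2 ^ e a := by positivity
      rw [Finset.sum_empty]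
      linarith
    · obtain ⟨j, hj, hj'⟩ := ih (he.mono (by simp)) h
      have h1 : e j ≠ e a := fun h => ha (by
        have := he (by simp [hj]) (by simp) h
        rwa [← this])
      have h2 : e j + 1 ≤ e a := by
        have := hmax j hj
        omega
      have h3 : (2 : ℝ) * 2 ^ e j = 2 ^ (e j + 1) := by
        rw [zpow_add₀ two_ne_zero, zpow_one]; ring
      have h4 : (2 : ℝ) ^ (e j + 1) ≤ 2 ^ e a := zpow_le_zpow_right₀ (by norm_num) h2
      linarith

lemma records (s : Finset DyadicI) (τ : DyadicI → DyadicI) (hτ : Function.Injective τ)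
    (e : DyadicI → ℤ) : ∃ R ⊆ s,
      (∀ I ∈ s, ∀ t ∈ toSet (τ I), ∃ J ∈ R, t ∈ toSet (τ J) ∧ e I ≤ e J) ∧
      (∀ t, Set.InjOn e (R.filter fun I => t ∈ toSet (τ I))) := by
  refine ⟨s.filter fun I => ∀ I' ∈ s, I' ≠ I → DyadicI.sub (τ I) (τ I') → e I' < e I,
    Finset.filter_subset _ _, ?_, ?_⟩
  · intro I hI t ht
    obtain ⟨J, hJ, hmin⟩ := Finset.exists_min_image
      (s.filter fun I' => t ∈ toSet (τ I') ∧ e I ≤ e I') (fun I' => (τ I').n)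
      ⟨I, by simp [hI, ht]⟩
    simp only [Finset.mem_filter] at hJ hmin
    refine ⟨J, ?_, hJ.2.1, hJ.2.2⟩
    simp only [Finset.mem_filter]
    refine ⟨hJ.1, fun I' hI' hne hsub => ?_⟩
    by_contra hcon
    push Not at hcon
    have h1 := (DyadicI.sub_iff hJ.2.1).1 hsub
    have h2 := hmin I' ⟨hI', h1.1, hJ.2.2.trans hcon⟩
    exact hne (hτ (DyadicI.eq_of (le_antisymm h2 h1.2) h1.1 hJ.2.1))
  · intro t
    have aux : ∀ I I' : DyadicI, (I ∈ s ∧ ∀ I' ∈ s, I' ≠ I → DyadicI.sub (τ I) (τ I') → e I' < e I) →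
        I' ∈ s → t ∈ toSet (τ I) → t ∈ toSet (τ I') → (τ I').n ≤ (τ I).n → e I = e I' → I = I' := by
      intro I I' hI hI' ht ht' hn he
      by_contra hne
      have := hI.2 I' hI' (Ne.symm hne) ((DyadicI.sub_iff ht).2 ⟨ht', hn⟩)
      omega
    intro I hI I' hI' he
    simp only [Finset.coe_filter, Finset.mem_filter, Set.mem_ofPred_eq] at hI hI'
    rcases le_total (τ I').n (τ I).n with h | h
    · exact aux I I' hI.1 hI'.1.1 hI.2 hI'.2 h he
    · exact (aux I' I hI'.1 hI.1.1 hI'.2 hI.2 h he.symm).symm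

end Records

section Main
variable {X : Type*} [NormedAddCommGroup X] [NormedSpace ℝ X]

lemma V_bound {p : ℝ} (hp : 0 < p) (hp2 : p < 2) (τ : DyadicI → DyadicI)
    (hτ : Function.Injective τ) (hfin : hpOpNorm τ p X ≠ ⊤) (e : X) (he : ‖e‖ = 1)
    (R : Finset DyadicI) (w : DyadicI → ℝ) (hw : ∀ I, 0 ≤ w I) (g : ℝ → ℝ) (hg : Nice g)
    (hwg : ∀ I ∈ R, ∀ t ∈ toSet I, w I ≤ g t)
    (hR : ∀ t, (R.filter fun I => t ∈ toSet (τ I)).Nonempty → ∃ J ∈ R, t ∈ toSet (τ J) ∧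
      ∑ I ∈ R, (if t ∈ toSet (τ I) then w I * (len I / len (τ I)) else 0) ≤
        2 * (w J * (len J / len (τ J)))) :
    ∑ I ∈ R, w I * len I ≤ 2 * ((hpOpNorm τ p X).toReal ^ p *
      ((∑ I ∈ R, w I * len I) ^ (p / 2) * (∫ t in Set.Icc (0 : ℝ) 1, g t) ^ (1 - p / 2))) := by
  set K := (hpOpNorm τ p X).toReal with hK
  set z : DyadicI → X := fun I => (w I ^ (1 / p)) • e with hz
  have hρ : ∀ I, 0 < len I / len (τ I) := fun I => div_pos I.len_pos (τ I).len_pos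
  have hv : ∀ I, 0 ≤ w I * (len I / len (τ I)) := fun I => mul_nonneg (hw I) (hρ I).le
  have h1 : ∑ I ∈ R, w I * len I = ∫ t in Set.Icc (0 : ℝ) 1, (∑ I ∈ R,
      if t ∈ toSet (τ I) then w I * (len I / len (τ I)) else 0) := by
    rw [integral_sum_ind R τ _ hv]
    refine Finset.sum_congr rfl fun I _ => ?_
    rw [mul_assoc, div_mul_cancel₀ _ (τ I).len_pos.ne']
  have h1' : ∑ I ∈ R, w I * len I = ∫ t in Set.Icc (0 : ℝ) 1, (∑ I ∈ R,
      if t ∈ toSet I then w I else 0) := (integral_sum_ind R id _ hw).symm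
  have h2 : ∑ I ∈ R, w I * len I ≤ 2 * Jp p (R.image τ) (rearrCoef τ p R z) := by
    rw [h1]
    unfold Jp
    rw [← integral_const_mul]
    refine Nice.integral_mono (nice_sum_ind R τ _ hv)
      (((sqFn_nice _ _).rpow hp.le).const_mul (by norm_num)) fun t => ?_
    by_cases hne : (R.filter fun I => t ∈ toSet (τ I)).Nonempty
    · obtain ⟨J, hJ, htJ, hJle⟩ := hR t hne
      refine hJle.trans ?_
      refine mul_le_mul_of_nonneg_left ?_ (by norm_num)
      have h3 := radN_single (R.image τ)
        (fun I => if t ∈ toSet I then rearrCoef τ p R z I else 0) (τ J)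
        (Finset.mem_image_of_mem _ hJ)
      rw [← sqFn_ind] at h3
      simp only [htJ, if_true] at h3
      rw [rearrCoef_apply τ hτ p R z J hJ] at h3
      simp only [hz] at h3
      rw [norm_smul, norm_smul, he, mul_one, Real.norm_of_nonneg (Real.rpow_nonneg (hρ J).le _),
        Real.norm_of_nonneg (Real.rpow_nonneg (hw J) _), mul_comm,
        ← Real.mul_rpow (hw J) (hρ J).le] at h3
      have h4 := Real.rpow_le_rpow (Real.rpow_nonneg (hv J) _) h3 hp.le
      rwa [← Real.rpow_mul (hv J), one_div_mul_cancel hp.ne', Real.rpow_one] at h4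
    · rw [Finset.sum_eq_zero]
      · exact mul_nonneg (by norm_num) (Real.rpow_nonneg (sqFn_nonneg _ _ _) _)
      · intro I hI
        rw [if_neg]
        intro hI'
        exact hne ⟨I, by simp [hI, hI']⟩
  have h5 : Jp p R z ≤ (∑ I ∈ R, w I * len I) ^ (p / 2) *
      (∫ t in Set.Icc (0 : ℝ) 1, g t) ^ (1 - p / 2) := by
    rw [h1']
    have hn : Nice (fun t => ∑ I ∈ R, if t ∈ toSet I then w I else 0) := nice_sum_ind R id _ hw
    refine le_trans ?_ (hn.holder hg (θ := p / 2) (by linarith) (by linarith))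
    refine Nice.integral_mono ((sqFn_nice _ _).rpow hp.le)
      ((hn.rpow (by linarith)).mul (hg.rpow (by linarith))) fun t => ?_
    have h6 : sqFn R z t = Real.sqrt (∑ I ∈ R, (if t ∈ toSet I then w I ^ (1 / p) else 0) ^ 2) := by
      rw [sqFn_ind, ← radN_scalar R _ e he]
      refine radN_congr R fun I _ => ?_
      simp only [hz]
      split_ifs <;> simp
    have h7 : ∑ I ∈ R, (if t ∈ toSet I then w I ^ (1 / p) else 0) ^ 2 ≤
        g t ^ (2 / p - 1) * ∑ I ∈ R, (if t ∈ toSet I then w I else 0) := by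
      rw [Finset.mul_sum]
      refine Finset.sum_le_sum fun I hI => ?_
      split_ifs with ht
      · have e1 : (w I ^ (1 / p)) ^ 2 = w I ^ (2 / p - 1) * w I := by
          have hpp : 0 < 2 / p - 1 := by
            rw [sub_pos, lt_div_iff₀ hp]; linarith
          rcases (hw I).eq_or_lt with h | h
          · rw [← h, Real.zero_rpow (by positivity)]; simp
          · nth_rewrite 3 [← Real.rpow_one (w I)]
            rw [← Real.rpow_add h, ← Real.rpow_natCast, ← Real.rpow_mul h.le]
            congr 1
            push_cast; ring
        rw [e1]
        refine mul_le_mul_of_nonneg_right (Real.rpow_le_rpow (hw I) (hwg I hI t ht) ?_) (hw I)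
        rw [sub_nonneg, le_div_iff₀ hp]; linarith
      · simp
    rw [h6, Real.sqrt_eq_rpow, ← Real.rpow_mul (Finset.sum_nonneg fun _ _ => sq_nonneg _)]
    have h8 := Real.rpow_le_rpow (Finset.sum_nonneg fun _ _ => sq_nonneg _) h7
      (show 0 ≤ 1 / 2 * p by linarith)
    refine h8.trans (le_of_eq ?_)
    rw [Real.mul_rpow (Real.rpow_nonneg (hg.nonneg t) _) (hn.nonneg t), mul_comm,
      ← Real.rpow_mul (hg.nonneg t)]
    congr 2
    · ring
    · field_simp
  refine h2.trans (mul_le_mul_of_nonneg_left ?_ (by norm_num))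
  exact (op_bound hp τ hfin R z).trans
    (mul_le_mul_of_nonneg_left h5 (Real.rpow_nonneg ENNReal.toReal_nonneg _))

lemma V_solve {p V B M : ℝ} (hp : 0 < p) (hp2 : p < 2) (hV : 0 ≤ V) (hB : 0 ≤ B) (hM : 0 ≤ M)
    (h : V ≤ M * (V ^ (p / 2) * B ^ (1 - p / 2))) : V ≤ M ^ (2 / (2 - p)) * B := by
  rcases hV.eq_or_lt with h0 | h0
  · rw [← h0]; positivity
  have hd : 0 < 1 - p / 2 := by linarith
  have hd' : 0 < 2 - p := by linarith
  have h1 : V ^ (1 - p / 2) ≤ M * B ^ (1 - p / 2) := by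
    have hVp : 0 < V ^ (p / 2) := by positivity
    have e1 : V ^ (1 - p / 2) * V ^ (p / 2) = V := by
      rw [← Real.rpow_add h0, sub_add_cancel, Real.rpow_one]
    refine le_of_mul_le_mul_right ?_ hVp
    rw [e1]
    linarith
  have h2 := Real.rpow_le_rpow (by positivity) h1 (show 0 ≤ 2 / (2 - p) by positivity)
  have e3 : (1 - p / 2) * (2 / (2 - p)) = 1 := by field_simp
  rwa [Real.mul_rpow hM (by positivity), ← Real.rpow_mul hV, ← Real.rpow_mul hB, e3,
    Real.rpow_one, Real.rpow_one] at h2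

lemma main_ineq {p q : ℝ} (hq : 0 < q) (hqp : q < p) (hp2 : p < 2) (τ : DyadicI → DyadicI)
    (hτ : Function.Injective τ) (hfin : hpOpNorm τ p X ≠ ⊤) (e : X) (he : ‖e‖ = 1)
    (s : Finset DyadicI) (x : DyadicI → X) :
    Jp q (s.image τ) (rearrCoef τ q s x) ≤
      ((hpOpNorm τ p X).toReal ^ p * (((1 - q / p) / (q / p) + 1) ^ p * Jp q s x)) ^ (q / p) *
      (2 * ((2 * (hpOpNorm τ p X).toReal ^ p) ^ (2 / (2 - p)) * Jp q s x)) ^ (1 - q / p) := by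
  have hp : 0 < p := hq.trans hqp
  set K := (hpOpNorm τ p X).toReal with hK
  have hK0 : 0 ≤ K := ENNReal.toReal_nonneg
  set θ := q / p with hθd
  have hθ : 0 < θ := div_pos hq hp
  have hθ1 : θ < 1 := (div_lt_one hp).2 hqp
  have hpθ : p * θ = q := by rw [hθd]; field_simp
  set C := (1 - θ) / θ + 1 with hC
  have hC0 : 0 ≤ C := add_nonneg (div_nonneg (by linarith) hθ.le) zero_le_one
  set B := Jp q s x with hB
  have hB0 : 0 ≤ B := Jp_nonneg hq s x
  set F := stF s x with hF
  have hF0 : ∀ I, 0 ≤ F I := stF_nonneg s x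
  have hρ : ∀ I, 0 < len I / len (τ I) := fun I => div_pos I.len_pos (τ I).len_pos
  set y : DyadicI → X := fun I => F I ^ (-(1 - θ)) • x I with hy
  -- norm of `y`
  have hyn : Jp p s y ≤ C ^ p * B := by
    rw [hB]
    unfold Jp
    rw [← integral_const_mul]
    refine Nice.integral_mono ((sqFn_nice _ _).rpow hp.le)
      (((sqFn_nice _ _).rpow hq.le).const_mul (Real.rpow_nonneg hC0 _)) fun t => ?_
    have h1 := Real.rpow_le_rpow (sqFn_nonneg _ _ _) (yBound s x hθ hθ1 t) hp.le
    rwa [Real.mul_rpow hC0 (Real.rpow_nonneg (sqFn_nonneg _ _ _) _),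
      ← Real.rpow_mul (sqFn_nonneg _ _ _), mul_comm θ p, hpθ] at h1
  have hTy : Jp p (s.image τ) (rearrCoef τ p s y) ≤ K ^ p * (C ^ p * B) :=
    (op_bound hp τ hfin s y).trans (mul_le_mul_of_nonneg_left hyn (Real.rpow_nonneg hK0 _))
  -- records
  set k : DyadicI → ℤ := fun I => Int.log 2 (F I ^ q) with hk
  set w : DyadicI → ℝ := fun I => (2 : ℝ) ^ k I with hwd
  have hw : ∀ I, 0 ≤ w I := fun I => by positivity
  set ex : DyadicI → ℤ := fun I => k I - I.n + (τ I).n with hex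
  have hv : ∀ I, w I * (len I / len (τ I)) = 2 ^ ex I := by
    intro I
    simp only [hwd, hex, DyadicI.len]
    rw [← zpow_sub₀ two_ne_zero, ← zpow_add₀ two_ne_zero]
    congr 1; ring
  have hv0 : ∀ I, 0 ≤ w I * (len I / len (τ I)) := fun I => mul_nonneg (hw I) (hρ I).le
  obtain ⟨R, hRs, hR1, hR2⟩ := records (s.filter fun I => 0 < F I) τ hτ ex
  set ν : ℝ → ℝ := fun t => ∑ I ∈ R, if t ∈ toSet (τ I) then w I * (len I / len (τ I)) else 0
    with hν
  have hνn : Nice ν := nice_sum_ind R τ _ hv0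
  set V := ∑ I ∈ R, w I * len I with hV
  have hVν : ∫ t in Set.Icc (0 : ℝ) 1, ν t = V := by
    rw [hν, hV, integral_sum_ind R τ _ hv0]
    refine Finset.sum_congr rfl fun I _ => ?_
    rw [mul_assoc, div_mul_cancel₀ _ (τ I).len_pos.ne']
  have hV0 : 0 ≤ V := Finset.sum_nonneg fun I _ => mul_nonneg (hw I) I.len_pos.le
  have hVle : V ≤ (2 * K ^ p) ^ (2 / (2 - p)) * B := by
    refine V_solve hp hp2 hV0 hB0 (mul_nonneg (by norm_num) (Real.rpow_nonneg hK0 _)) ?_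
    have := V_bound hp hp2 τ hτ hfin e he R w hw (fun t => sqFn s x t ^ q)
      ((sqFn_nice _ _).rpow hq.le) ?_ ?_
    · rw [mul_assoc]; exact this
    · intro I hI t ht
      have hFI : 0 < F I := (Finset.mem_filter.1 (hRs hI)).2
      have h1 : w I ≤ F I ^ q := Int.zpow_log_le_self (b := 2) (by norm_num) (by positivity)
      exact h1.trans (Real.rpow_le_rpow hFI.le (stF_le_sqFn s x I t ht) hq.le)
    · intro t hne
      obtain ⟨J, hJ, hJle⟩ := sum_two_pow _ ex (hR2 t) hne
      rw [Finset.mem_filter] at hJ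
      refine ⟨J, hJ.1, hJ.2, ?_⟩
      rw [hv J, ← Finset.sum_filter]
      simp only [hv]
      exact hJle
  have hνle : ∀ I ∈ s, 0 < F I → ∀ t ∈ toSet (τ I), F I ^ q * (len I / len (τ I)) ≤ 2 * ν t := by
    intro I hI hFI t ht
    obtain ⟨J, hJ, htJ, hle⟩ := hR1 I (Finset.mem_filter.2 ⟨hI, hFI⟩) t ht
    have h1 : F I ^ q ≤ 2 * w I := by
      have := Int.lt_zpow_succ_log_self (b := 2) (by norm_num) (F I ^ q)
      rw [zpow_add₀ (by norm_num), zpow_one] at this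
      have h' : w I = ((2 : ℕ) : ℝ) ^ Int.log 2 (F I ^ q) := rfl
      rw [h']
      push_cast at this ⊢
      linarith
    have h2 : w J * (len J / len (τ J)) ≤ ν t := by
      have := Finset.single_le_sum (s := R)
        (f := fun I => if t ∈ toSet (τ I) then w I * (len I / len (τ I)) else 0)
        (fun I _ => by
          show 0 ≤ if t ∈ toSet (τ I) then w I * (len I / len (τ I)) else 0
          split_ifs
          · exact hv0 I
          · exact le_rfl) hJ
      simp only [htJ, if_true] at this
      exact this
    have h3 : w I * (len I / len (τ I)) ≤ w J * (len J / len (τ J)) := by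
      rw [hv, hv]; exact zpow_le_zpow_right₀ (by norm_num) hle
    calc F I ^ q * (len I / len (τ I)) ≤ (2 * w I) * (len I / len (τ I)) :=
          mul_le_mul_of_nonneg_right h1 (hρ I).le
      _ = 2 * (w I * (len I / len (τ I))) := by ring
      _ ≤ 2 * ν t := by linarith
  have hd : 0 < 1 / q - 1 / p := by
    rw [sub_pos]; exact one_div_lt_one_div_of_lt hq hqp
  -- pointwise
  have hpt : ∀ t, sqFn (s.image τ) (rearrCoef τ q s x) t ≤
      (2 * ν t) ^ (1 / q - 1 / p) * sqFn (s.image τ) (rearrCoef τ p s y) t := by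
    intro t
    have hΛ : 0 ≤ (2 * ν t) ^ (1 / q - 1 / p) :=
      Real.rpow_nonneg (mul_nonneg (by norm_num) (hνn.nonneg t)) _
    set c : DyadicI → ℝ := fun J => if t ∈ toSet J then
      F (Function.invFun τ J) ^ (1 - θ) *
        (len (Function.invFun τ J) / len J) ^ (1 / q - 1 / p) else 0 with hc
    rw [sqFn_ind, sqFn_ind]
    have hinv : ∀ I, Function.invFun τ (τ I) = I := Function.leftInverse_invFun hτ
    refine le_trans (le_of_eq ?_) (radN_contr (s.image τ)
      (fun I => if t ∈ toSet I then rearrCoef τ p s y I else 0) c _ hΛ ?_)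
    · refine radN_congr _ fun J hJ => ?_
      obtain ⟨I, hI, rfl⟩ := Finset.mem_image.1 hJ
      simp only [hc, hinv]
      split_ifs with ht
      · rw [rearrCoef_apply τ hτ q s x I hI, rearrCoef_apply τ hτ p s y I hI]
        simp only [hy]
        rcases (hF0 I).eq_or_lt with h | h
        · rw [stF_zero s x I hI h.symm]; simp
        · rw [smul_smul, smul_smul]
          congr 1
          have e1 : F I ^ (1 - θ) * F I ^ (-(1 - θ)) = 1 := by
            rw [← Real.rpow_add h, add_neg_cancel, Real.rpow_zero]
          have e2 : (len I / len (τ I)) ^ (1 / q - 1 / p) * (len I / len (τ I)) ^ (1 / p) =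
              (len I / len (τ I)) ^ (1 / q) := by
            rw [← Real.rpow_add (hρ I), sub_add_cancel]
          rw [← e2]
          linear_combination (-(len I / len (τ I)) ^ (1 / q - 1 / p) *
            (len I / len (τ I)) ^ (1 / p)) * e1
      · simp
    · intro J hJ
      obtain ⟨I, hI, rfl⟩ := Finset.mem_image.1 hJ
      simp only [hc, hinv]
      split_ifs with ht
      · rcases (hF0 I).eq_or_lt with h | h
        · rw [← h, Real.zero_rpow (by linarith)]; simpa using hΛ
        · have e1 : F I ^ (1 - θ) = (F I ^ q) ^ (1 / q - 1 / p) := by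
            rw [← Real.rpow_mul h.le]; congr 1; rw [hθd]; field_simp
          rw [e1, ← Real.mul_rpow (Real.rpow_nonneg h.le _) (hρ I).le,
            abs_of_nonneg (Real.rpow_nonneg (mul_nonneg (Real.rpow_nonneg h.le _) (hρ I).le) _)]
          exact Real.rpow_le_rpow (mul_nonneg (Real.rpow_nonneg h.le _) (hρ I).le)
            (hνle I hI h t ht) hd.le
      · simpa using hΛ
  have h2ν : Nice (fun t => 2 * ν t) := hνn.const_mul (by norm_num)
  have hSp : Nice (fun t => sqFn (s.image τ) (rearrCoef τ p s y) t ^ p) :=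
    (sqFn_nice _ _).rpow hp.le
  calc Jp q (s.image τ) (rearrCoef τ q s x)
      ≤ ∫ t in Set.Icc (0 : ℝ) 1, (sqFn (s.image τ) (rearrCoef τ p s y) t ^ p) ^ θ *
          (2 * ν t) ^ (1 - θ) := by
        refine Nice.integral_mono ((sqFn_nice _ _).rpow hq.le)
          ((hSp.rpow hθ.le).mul (h2ν.rpow (by linarith))) fun t => ?_
        have h1 := Real.rpow_le_rpow (sqFn_nonneg _ _ _) (hpt t) hq.le
        refine h1.trans (le_of_eq ?_)
        rw [Real.mul_rpow (Real.rpow_nonneg (h2ν.nonneg t) _) (sqFn_nonneg _ _ _),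
          ← Real.rpow_mul (h2ν.nonneg t), ← Real.rpow_mul (sqFn_nonneg _ _ _), hpθ, mul_comm]
        congr 2
        rw [hθd]; field_simp
    _ ≤ (Jp p (s.image τ) (rearrCoef τ p s y)) ^ θ *
        (∫ t in Set.Icc (0 : ℝ) 1, 2 * ν t) ^ (1 - θ) := hSp.holder h2ν hθ hθ1
    _ ≤ _ := by
        rw [integral_const_mul, hVν]
        have hJ := Jp_nonneg hp (s.image τ) (rearrCoef τ p s y)
        refine mul_le_mul (Real.rpow_le_rpow hJ hTy hθ.le) (Real.rpow_le_rpow (by positivity)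
          (mul_le_mul_of_nonneg_left hVle (by norm_num)) (by linarith)) (by positivity) ?_
        positivity

lemma main_ineq2 {p q : ℝ} (hq : 0 < q) (hqp : q < p) (hp2 : p < 2) {K C B : ℝ} (hK : 0 ≤ K)
    (hC : 0 ≤ C) (hB : 0 ≤ B) (hB1 : B ≤ 1) :
    ((K ^ p * (C ^ p * B)) ^ (q / p) *
      (2 * ((2 * K ^ p) ^ (2 / (2 - p)) * B)) ^ (1 - q / p)) ^ (1 / (2 - q)) ≤
    ((C ^ p) ^ (q / p) * (2 * 2 ^ (2 / (2 - p))) ^ (1 - q / p)) ^ (1 / (2 - q)) *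
      K ^ (p / (2 - p)) := by
  have hp : 0 < p := hq.trans hqp
  have hd : 0 < 2 - p := by linarith
  have hd' : 0 < 2 - q := by linarith
  have hθ1 : 0 < 1 - q / p := by rw [sub_pos]; exact (div_lt_one hp).2 hqp
  have hKp : 0 ≤ K ^ p := by positivity
  have e : K ^ (p / (2 - p)) = ((K ^ p) ^ (q / p) * (K ^ p) ^ (2 / (2 - p) * (1 - q / p))) ^
      (1 / (2 - q)) := by
    rcases hK.eq_or_lt with h | h
    · rw [← h, Real.zero_rpow (by positivity), Real.zero_rpow hp.ne',
        Real.zero_rpow (by positivity), zero_mul, Real.zero_rpow (by positivity)]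
    · rw [← Real.rpow_add (by positivity), ← Real.rpow_mul hKp, ← Real.rpow_mul hK]
      congr 1
      field_simp
      ring
  rw [e, ← Real.mul_rpow (by positivity) (by positivity)]
  refine Real.rpow_le_rpow (by positivity) ?_ (by positivity)
  have h1 : (K ^ p * (C ^ p * B)) ^ (q / p) ≤ (K ^ p) ^ (q / p) * (C ^ p) ^ (q / p) := by
    rw [← Real.mul_rpow (by positivity) (by positivity)]
    refine Real.rpow_le_rpow (by positivity) ?_ (by positivity)
    exact mul_le_mul_of_nonneg_left (mul_le_of_le_one_right (by positivity) hB1) hKp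
  have h2 : (2 * ((2 * K ^ p) ^ (2 / (2 - p)) * B)) ^ (1 - q / p) ≤
      (2 * 2 ^ (2 / (2 - p))) ^ (1 - q / p) * (K ^ p) ^ (2 / (2 - p) * (1 - q / p)) := by
    rw [Real.rpow_mul hKp, ← Real.mul_rpow (by positivity) (by positivity)]
    refine Real.rpow_le_rpow (by positivity) ?_ hθ1.le
    rw [Real.mul_rpow (by norm_num) hKp, mul_assoc 2]
    exact mul_le_mul_of_nonneg_left (mul_le_of_le_one_right (by positivity) hB1) (by norm_num)
  refine (mul_le_mul h1 h2 (by positivity) (by positivity)).trans (le_of_eq ?_)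
  ring

end Main

/-- Let `0 < q ≤ p < 2`. There is a constant `A(p,q) > 0`, depending
only on `p` and `q`, such that for every Banach space `X` and every injective
`τ : D → D`,
`‖T_{τ,q} ⊗ Id_X‖_q^{q/(2-q)} ≤ A(p,q) ‖T_{τ,p} ⊗ Id_X‖_p^{p/(2-p)}` in `[0,∞]`. -/
theorem statement0 (p q : ℝ) (hq : 0 < q) (hqp : q ≤ p) (hp : p < 2) :
    ∃ A : ℝ, 0 < A ∧
      ∀ (X : Type*) [NormedAddCommGroup X] [NormedSpace ℝ X] [CompleteSpace X]
        (τ : DyadicI → DyadicI), Function.Injective τ →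
          hpOpNorm τ q X ^ (q / (2 - q)) ≤
            ENNReal.ofReal A * hpOpNorm τ p X ^ (p / (2 - p)) := by
  rcases hqp.eq_or_lt with heq | hlt
  · refine ⟨1, one_pos, ?_⟩
    intro X _ _ _ τ hτ
    rw [heq]
    simp
  have hp0 : 0 < p := hq.trans hlt
  have hd : 0 < 2 - p := by linarith
  have hd' : 0 < 2 - q := by linarith
  have hθ : 0 < q / p := div_pos hq hp0
  have hθ1 : 0 < 1 - q / p := by rw [sub_pos]; exact (div_lt_one hp0).2 hlt
  have hC : 0 < (1 - q / p) / (q / p) + 1 := by positivity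
  set C := (1 - q / p) / (q / p) + 1 with hCd
  refine ⟨((C ^ p) ^ (q / p) * (2 * 2 ^ (2 / (2 - p))) ^ (1 - q / p)) ^ (1 / (2 - q)),
    by positivity, ?_⟩
  set A := ((C ^ p) ^ (q / p) * (2 * 2 ^ (2 / (2 - p))) ^ (1 - q / p)) ^ (1 / (2 - q)) with hA
  have hA0 : 0 < A := by positivity
  intro X _ _ _ τ hτ
  by_cases hfin : hpOpNorm τ p X = ⊤
  · rw [hfin, ENNReal.top_rpow_of_pos (by positivity), ENNReal.mul_top (by simpa using hA0)]
    exact le_top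
  have hexp : 0 < q / (2 - q) := by positivity
  rw [← ENNReal.le_rpow_inv_iff hexp]
  unfold hpOpNorm
  refine iSup_le fun s => iSup_le fun x => iSup_le fun hx => ?_
  change ENNReal.ofReal _ ≤ (ENNReal.ofReal A * hpOpNorm τ p X ^ (p / (2 - p))) ^ _
  rw [ENNReal.le_rpow_inv_iff hexp]
  set K := (hpOpNorm τ p X).toReal with hK
  have hK0 : 0 ≤ K := ENNReal.toReal_nonneg
  rw [← ENNReal.ofReal_toReal hfin, ENNReal.ofReal_rpow_of_nonneg hK0 (by positivity),
    ← ENNReal.ofReal_mul hA0.le]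
  have hJ0 : 0 ≤ Jp q (s.image τ) (rearrCoef τ q s x) := Jp_nonneg hq _ _
  have hH0 : 0 ≤ HpNormV q (s.image τ) (rearrCoef τ q s x) := Real.rpow_nonneg hJ0 _
  rw [ENNReal.ofReal_rpow_of_nonneg hH0 hexp.le]
  refine ENNReal.ofReal_le_ofReal ?_
  have e1 : HpNormV q (s.image τ) (rearrCoef τ q s x) ^ (q / (2 - q)) =
      Jp q (s.image τ) (rearrCoef τ q s x) ^ (1 / (2 - q)) := by
    change (Jp q (s.image τ) (rearrCoef τ q s x) ^ (1 / q)) ^ (q / (2 - q)) = _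
    rw [← Real.rpow_mul hJ0]
    congr 1
    field_simp
  rw [e1]
  have hB0 : 0 ≤ Jp q s x := Jp_nonneg hq _ _
  have hB1 : Jp q s x ≤ 1 := by
    have h := Real.rpow_le_rpow (Real.rpow_nonneg hB0 _) hx hq.le
    change (Jp q s x ^ (1 / q)) ^ q ≤ 1 ^ q at h
    rwa [← Real.rpow_mul hB0, one_div_mul_cancel hq.ne', Real.rpow_one, Real.one_rpow] at h
  by_cases htriv : ∀ v : X, v = 0
  · have : Jp q (s.image τ) (rearrCoef τ q s x) = 0 := by
      have h0 : rearrCoef τ q s x = fun J => (0 : ℝ) • (0 : X) := by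
        funext J; exact (htriv _).trans (htriv _).symm
      rw [h0, Jp_smul _ (fun _ => (0 : X)) le_rfl, Real.zero_rpow hq.ne', zero_mul]
    rw [this, Real.zero_rpow (by positivity)]
    positivity
  · push Not at htriv
    obtain ⟨v, hv⟩ := htriv
    have he : ‖(‖v‖⁻¹ : ℝ) • v‖ = 1 := norm_smul_inv_norm (𝕜 := ℝ) hv
    have h1 := main_ineq hq hlt hp τ hτ hfin _ he s x
    exact (Real.rpow_le_rpow hJ0 h1 (by positivity)).trans
      (main_ineq2 hq hlt hp hK0 hC.le hB0 hB1)
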